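/- Let X, X' be metric spaces with X uniformly perfect, let f : X → X' be an η-quasisymmetric homeomorphism for some homeomorphism η : [0,∞) → [0,∞), and let Y ⊆ X be porous. Then the image f(Y) is a porous subset of X'. -/

import Mathlib

open scoped NNReal

/-- A subset `Y` of a metric space `X` is porous: there is `c > 0` such that for every
`y ∈ Y` and every radius `0 < r ≤ diam X` there is `x ∈ X` with
`B(x, c·r) ⊆ B(y, r) \ Y`. -/
def Porous {X : Type*} [MetricSpace X] (Y : Set X) : Prop :=
  ∃ c : ℝ, 0 < c ∧ ∀ y ∈ Y, ∀ r : ℝ, 0 < r →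
    ENNReal.ofReal r ≤ EMetric.diam (Set.univ : Set X) →
    ∃ x : X, Metric.ball x (c * r) ⊆ Metric.ball y r \ Y

/-- `f` is `η`-quasisymmetric, where the control function `η` is a self-homeomorphism of
`[0,∞)`: for all `x, y, z` and `t ≥ 0`, `d(x,y) ≤ t·d(x,z)` implies
`d(f x, f y) ≤ η t · d(f x, f z)`. -/
def IsQuasisymmetricWith {X X' : Type*} [MetricSpace X] [MetricSpace X']
    (η : ℝ≥0 ≃ₜ ℝ≥0) (f : X → X') : Prop :=
  ∀ x y z : X, ∀ t : ℝ≥0, nndist x y ≤ t * nndist x z →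
    nndist (f x) (f y) ≤ η t * nndist (f x) (f z)

/-- A metric space `X` is uniformly perfect: for some `C > 1`, for every `x ∈ X` and every
`0 < r ≤ diam X` the set `B(x, r) \ B(x, r/C)` is nonempty. -/
def UniformlyPerfect (X : Type*) [MetricSpace X] : Prop :=
  ∃ C : ℝ, 1 < C ∧ ∀ x : X, ∀ r : ℝ, 0 < r →
    ENNReal.ofReal r ≤ EMetric.diam (Set.univ : Set X) →
    (Metric.ball x r \ Metric.ball x (r / C)).Nonempty

/-!
Given `y ∈ Y` and a radius `r ≤ diam X'`, the preimage `U` of `B(f y, r/3)` is a neighbourhood of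
`y`, and it is not all of `X` since `2r/3 < diam X'`. So for `R = d(y, Uᶜ)` we have `B(y, R) ⊆ U`
while some `w ∉ U` has `d(y, w) < 2R`. Porosity of `Y` at scale `R` gives a hole
`B(x, cR) ⊆ B(y, R) \ Y`. Both `d(x, y)` and `d(x, w)` are less than `3R = (3/c) · cR`, so for every
`z` outside the hole quasisymmetry gives `r/3 ≤ d(f y, f w) ≤ 2 η(3/c) d(f x, f z)`: the image of
the hole contains a ball about `f x` of radius comparable to `r`.
-/

open Set Metric Topology

theorem homeomorph_map_bot {α β : Type*} [ConditionallyCompleteLinearOrder α]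
    [TopologicalSpace α] [OrderTopology α] [DenselyOrdered α] [OrderBot α]
    [LinearOrder β] [TopologicalSpace β] [OrderClosedTopology β] [OrderBot β] [NoMaxOrder β]
    (e : α ≃ₜ β) : e ⊥ = ⊥ := by
  rcases e.continuous.strictMono_of_inj e.injective with hmono | hanti
  · obtain ⟨a, ha⟩ := e.surjective ⊥
    exact le_bot_iff.1 (ha ▸ hmono.monotone bot_le)
  · obtain ⟨b, hb⟩ := exists_gt (e ⊥)
    obtain ⟨a, rfl⟩ := e.surjective b
    exact absurd (hanti.antitone bot_le) hb.not_ge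

section PseudoMetricSpace

variable {X X' : Type*} [PseudoMetricSpace X] [PseudoMetricSpace X']

theorem exists_ball_subset_and_not_ball_mul_subset {y : X} {U : Set X} (hU : U ∈ 𝓝 y)
    (hne : U ≠ univ) {k : ℝ} (hk : 1 < k) :
    ∃ R, 0 < R ∧ ball y R ⊆ U ∧ ¬ball y (k * R) ⊆ U := by
  have hcompl : Uᶜ.Nonempty := nonempty_compl.2 hne
  have hpos : 0 < infDist y Uᶜ := by
    rwa [← infDist_pos_iff_notMem_closure hcompl, closure_compl, notMem_compl_iff,
      mem_interior_iff_mem_nhds]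
  refine ⟨infDist y Uᶜ, hpos, ball_infDist_compl_subset, not_subset.2 ?_⟩
  obtain ⟨w, hwU, hw⟩ := (infDist_lt_iff hcompl).1 (lt_mul_of_one_lt_left hpos hk)
  exact ⟨w, mem_ball'.2 hw, hwU⟩

theorem ball_ne_univ_of_two_mul_lt_ediam {ρ : ℝ}
    (h : ENNReal.ofReal (2 * ρ) < ediam (univ : Set X)) (y : X) : ball y ρ ≠ univ := by
  intro hball
  refine h.not_ge ?_
  rw [← hball, ← eball_ofReal, ENNReal.ofReal_mul zero_le_two, ENNReal.ofReal_ofNat]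
  exact ediam_eball_le

theorem exists_image_ball_subset_ball_and_le_dist {f : X → X'} {y : X} (hf : ContinuousAt f y)
    (hsurj : Function.Surjective f) {r : ℝ} (hr : 0 < r)
    (hdiam : ENNReal.ofReal r ≤ ediam (univ : Set X')) :
    ∃ R, 0 < R ∧ ENNReal.ofReal R ≤ ediam (univ : Set X) ∧ f '' ball y R ⊆ ball (f y) r ∧
      ∃ w, dist y w < 2 * R ∧ r / 3 ≤ dist (f y) (f w) := by
  have hlt : ENNReal.ofReal (2 * (r / 3)) < ediam (univ : Set X') :=
    ((ENNReal.ofReal_lt_ofReal_iff hr).2 (by linarith)).trans_le hdiam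
  obtain ⟨R, hR, hRU, hRw⟩ := exists_ball_subset_and_not_ball_mul_subset
    (hf.preimage_mem_nhds (ball_mem_nhds (f y) (by positivity)))
    (hsurj.preimage_injective.ne (ball_ne_univ_of_two_mul_lt_ediam hlt (f y))) one_lt_two
  obtain ⟨w, hwR, hw⟩ := not_subset.1 hRw
  have hRdist : R ≤ dist y w := not_lt.1 fun h => hw (hRU (mem_ball'.2 h))
  refine ⟨R, hR, ?_, ?_, w, mem_ball'.1 hwR, not_lt.1 fun h => hw (mem_ball'.2 h)⟩
  · calc ENNReal.ofReal R ≤ edist y w := by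
          rw [edist_dist]
          exact ENNReal.ofReal_le_ofReal hRdist
      _ ≤ ediam univ := edist_le_ediam_of_mem (mem_univ y) (mem_univ w)
  · exact (image_subset_iff.2 hRU).trans (ball_subset_ball (by linarith))

end PseudoMetricSpace

namespace IsQuasisymmetricWith

variable {X X' : Type*} [MetricSpace X] [MetricSpace X'] {η : ℝ≥0 ≃ₜ ℝ≥0} {f : X → X'}

theorem dist_map_le (hf : IsQuasisymmetricWith η f) {x y z : X} {t : ℝ≥0}
    (h : dist x y ≤ t * dist x z) : dist (f x) (f y) ≤ η t * dist (f x) (f z) :=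
  mod_cast hf x y z t (mod_cast h)

protected theorem continuous (hf : IsQuasisymmetricWith η f) : Continuous f := by
  rcases subsingleton_or_nontrivial X with _ | _
  · exact continuous_of_const fun x y => congrArg f (Subsingleton.elim x y)
  refine continuous_iff_continuousAt.2 fun x => ?_
  obtain ⟨z, hzx⟩ := exists_ne x
  have hbound (y : X) :
      dist (f y) (f x) ≤ η (nndist x y / nndist x z) * dist (f x) (f z) := by
    rw [dist_comm]
    refine hf.dist_map_le (le_of_eq ?_)
    simp [div_mul_cancel₀ _ (dist_ne_zero.2 hzx.symm)]
  have hη : η 0 = 0 := homeomorph_map_bot η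
  have hcont : Continuous fun y => (η (nndist x y / nndist x z) : ℝ) * dist (f x) (f z) := by
    fun_prop
  refine tendsto_iff_dist_tendsto_zero.2 (squeeze_zero (fun _ => dist_nonneg) hbound ?_)
  simpa [hη] using hcont.tendsto x

theorem injective_of_map_ne (hf : IsQuasisymmetricWith η f) {a b : X} (hab : f a ≠ f b) :
    Function.Injective f := by
  intro u v huv
  by_contra hne
  have hconst (x : X) : f u = f x := by
    have h := hf u x v (nndist u x / nndist u v)
      (div_mul_cancel₀ _ (nndist_eq_zero.not.2 hne)).ge
    simpa [huv] using h
  exact hab ((hconst a).symm.trans (hconst b))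

theorem dist_map_le_two_mul (hf : IsQuasisymmetricWith η f) {x y z w : X} {t : ℝ≥0}
    (hy : dist x y ≤ t * dist x z) (hw : dist x w ≤ t * dist x z) :
    dist (f y) (f w) ≤ 2 * η t * dist (f x) (f z) :=
  calc dist (f y) (f w) ≤ dist (f x) (f y) + dist (f x) (f w) := dist_triangle_left _ _ _
    _ ≤ η t * dist (f x) (f z) + η t * dist (f x) (f z) :=
      add_le_add (hf.dist_map_le hy) (hf.dist_map_le hw)
    _ = 2 * η t * dist (f x) (f z) := by ring

theorem ball_subset_image_ball (hf : IsQuasisymmetricWith η f) (hsurj : Function.Surjective f)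
    {x y w : X} {t : ℝ≥0} {ρ : ℝ} (hy : dist x y ≤ t * ρ) (hw : dist x w ≤ t * ρ) :
    ball (f x) (dist (f y) (f w) / (2 * η t)) ⊆ f '' ball x ρ := by
  intro z' hz'
  obtain ⟨z, rfl⟩ := hsurj z'
  refine mem_image_of_mem f (mem_ball'.2 (lt_of_not_ge fun hρ => ?_))
  have hdist : dist (f y) (f w) ≤ dist (f x) (f z) * (2 * η t) := by
    rw [mul_comm]
    exact hf.dist_map_le_two_mul (hy.trans (by gcongr)) (hw.trans (by gcongr))
  exact (mem_ball'.1 hz').not_ge (div_le_of_le_mul₀ (by positivity) dist_nonneg hdist)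

theorem ball_subset_image_sdiff (hf : IsQuasisymmetricWith η f) (hsurj : Function.Surjective f)
    {x y w : X} {Y : Set X} {c : ℝ≥0} {R : ℝ} (hc : 0 < c)
    (hx : ball x (c * R) ⊆ ball y R \ Y) (hw : dist y w < 2 * R) :
    ball (f x) (dist (f y) (f w) / (2 * η (3 / c))) ⊆ f '' ball y R \ f '' Y := by
  rcases eq_or_ne (f y) (f w) with hyw | hyw
  · simp [hyw]
  have hR : 0 < R := by linarith [dist_nonneg (x := y) (y := w)]
  have hxy : dist x y < R := (hx (mem_ball_self (by positivity))).1
  have hscale : ((3 / c : ℝ≥0) : ℝ) * (c * R) = 3 * R := by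
    push_cast
    field_simp
  calc ball (f x) (dist (f y) (f w) / (2 * η (3 / c)))
      ⊆ f '' ball x (c * R) := hf.ball_subset_image_ball hsurj
        (by linarith) (by linarith [dist_triangle x y w])
    _ ⊆ f '' (ball y R \ Y) := image_mono hx
    _ = f '' ball y R \ f '' Y := image_sdiff (hf.injective_of_map_ne hyw) _ _

end IsQuasisymmetricWith

theorem porous_image_of_quasisymmetric_general {X X' : Type*} [MetricSpace X] [MetricSpace X']
    {f : X → X'} (hsurj : Function.Surjective f) {η : ℝ≥0 ≃ₜ ℝ≥0}
    (hf : IsQuasisymmetricWith η f) {Y : Set X} (hY : Porous Y) : Porous (f '' Y) := by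
  obtain ⟨c, hc, hhole⟩ := hY
  lift c to ℝ≥0 using hc.le
  rw [NNReal.coe_pos] at hc
  have hη : 0 < η (3 / c) := pos_iff_ne_zero.2 fun h =>
    (by positivity : 3 / c ≠ 0) (η.injective (h.trans (homeomorph_map_bot η).symm))
  refine ⟨1 / (6 * η (3 / c)), by positivity, ?_⟩
  rintro _ ⟨y, hyY, rfl⟩ r hr hdiam
  obtain ⟨R, hR, hRdiam, hRr, w, hw, hfw⟩ := exists_image_ball_subset_ball_and_le_dist
    hf.continuous.continuousAt hsurj hr hdiam
  obtain ⟨x, hx⟩ := hhole y hyY R hR hRdiam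
  have hradius : 1 / (6 * η (3 / c)) * r ≤ dist (f y) (f w) / (2 * η (3 / c)) :=
    calc 1 / (6 * η (3 / c)) * r = r / 3 / (2 * η (3 / c)) := by ring
      _ ≤ dist (f y) (f w) / (2 * η (3 / c)) := by gcongr
  exact ⟨f x, (ball_subset_ball hradius).trans <|
    (hf.ball_subset_image_sdiff hsurj hc hx hw).trans (sdiff_subset_sdiff_left hRr)⟩

/-- If `X` is uniformly perfect, `f : X → X'` is an `η`-quasisymmetric homeomorphism and
`Y ⊆ X` is porous, then `f(Y)` is porous in `X'`. -/
theorem porous_image_of_quasisymmetric {X X' : Type*} [MetricSpace X] [MetricSpace X']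
    (hX : UniformlyPerfect X) (f : X ≃ₜ X') (η : ℝ≥0 ≃ₜ ℝ≥0)
    (hf : IsQuasisymmetricWith η f) (Y : Set X) (hY : Porous Y) :
    Porous (f '' Y) :=
  porous_image_of_quasisymmetric_general f.surjective hf hY
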